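/- Divided powers of X_n^+ on the Schur basis: for all r ≥ 1, n, m ∈ ℤ, i ∈ {0,1} and every partition μ = (μ₁,…,μ_l), the following holds in W_i: X_n^{+(r)} (s_μ e^{mα}e^{iα/2}) = q^{−3r(r−1)/2 − r(n+1+2m+i)} · ∑_λ q^{−2|λ|} · s_λ · s_{(ν(λ), μ)} · e^{(m+r)α}e^{iα/2}, where the sum is over all partitions λ = (λ₁,…,λ_r) with at most r parts (all but finitely many terms are zero), ν(λ) := (−λ_k − 2(r−k) − (n+1+2m+i))_{k=1,…,r}, and (ν(λ), μ) ∈ ℤ^{r+l} is the juxtaposed tuple. -/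

import Mathlib

/-!
Write `N = n+1+2m+i`, and let `B_b = ∑_j (-1)^j h_{b+j} e_j^⊥` be the Bernstein operators.
The annihilation half of `X^+(z)` acts as the translation `p_n ↦ p_n - q^{-n}z^{-n}` (Taylor's
formula, `DopF_genFamF`), and the creation half is the product of the generating series of `h` at
`q⁻¹z` and at `qz`. Hence on the component `e^{mα}e^{iα/2}` the operator `X_n^+` is
`∑_a q^{-N-2a} h_a B_{-N-a}` (`Xp_single`, `curr_eq`). Two properties of `B` are used:
`B_b (h_a P) = h_a B_b P - h_{a-1} B_{b+1} P` (`bern_hZF_mul`) and `B_b s_ρ = s_{(b,ρ)}` for every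
integer tuple `ρ` (`bern_schurF`).

Let `A_r(x) = s_{(c,μ)}` with `c_k = -N - x_k - (r-1-k)` (indices from `0`). The first `r` rows of
its determinant depend on the row number only through `x`, so `A_r` is alternating, and so is
`K_r(s) = ∑_{a ∈ ℤ^r} q^{-2|a|} h_{a_1}⋯h_{a_r} A_r(a+s)` as a function of `s`; the sum is finite
because `s_ρ = 0` when `|ρ| < 0`. With `δ_r = (r-1,…,0)`, induction on `r` shows that `(X_n^+)^r s_μ`
is `q^{-3r(r-1)/2-rN} [r]! K_r(δ_r)`. In the induction step (`curr_altK`), moving `B` past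
`h_{a_1}⋯h_{a_r}` produces a sum over subsets `I ⊆ {1,…,r}` of
`(-q^{-2})^{|I|} K_{r+1}(r-|I|, δ_r + 1_I)`.
If `I` is not an initial segment, the argument has a repeated entry and the term vanishes; if `I` is
the initial segment of length `k`, the argument is a `(k+1)`-cycle applied to `δ_{r+1}`, giving the
sign `(-1)^k`. The total factor is `∑_{k=0}^r q^{-2k} = q^{-r}[r+1]`.

Finally (`altK_stair`), the terms of `K_r(δ_r)` vanish unless `a + δ_r` has distinct nonnegative
entries, i.e. is uniquely `(λ+δ_r)∘σ` with `λ` a partition and `σ` a permutation. Summing over `σ`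
with the signs of `A_r` turns the products of `h`'s into the Jacobi–Trudi determinant `s_λ`.
-/

open MvPolynomial

noncomputable section

/-- The base field `F = ℚ(q)`. -/
abbrev Fq : Type := RatFunc ℚ

/-- The indeterminate `q ∈ ℚ(q)`. -/
def qq : Fq := RatFunc.X

/-- `Λ_F = F[p₁,p₂,…]`, with the variable `X n` (for `n : ℕ+`) the power sum `p_n`. -/
abbrev LamF : Type := MvPolynomial ℕ+ Fq

/-- The power sum `p_n`. -/
def ppF (n : ℕ+) : LamF := X n

/-- The family `g` with generating function `∑_k g_k t^k = exp (∑_{n≥1} c n · p_n tⁿ/n)`,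
characterized by `g 0 = 1` and the recursion obtained by differentiating:
`(k+1) · g (k+1) = ∑_{i=0}^{k} c (i+1) · p_{i+1} · g (k−i)`. -/
def genFamF (c : ℕ → Fq) : ℕ → LamF
  | 0 => 1
  | (k+1) => (((k : Fq) + 1)⁻¹) •
      ∑ i ∈ Finset.range (k+1), c (i+1) • (ppF ⟨i+1, Nat.succ_pos i⟩ * genFamF c (k - i))
  decreasing_by exact Nat.lt_succ_of_le (Nat.sub_le k i)

/-- The complete homogeneous symmetric function `h_k`. -/
def hhF : ℕ → LamF := genFamF fun _ => 1

/-- The elementary symmetric function `e_k`. -/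
def eeF : ℕ → LamF := genFamF fun n => (-1)^(n+1)

/-- `h` indexed by `ℤ` (zero in negative degrees). -/
def hZF (n : ℤ) : LamF := if 0 ≤ n then hhF n.toNat else 0

/-- `e` indexed by `ℤ` (zero in negative degrees). -/
def eZF (n : ℤ) : LamF := if 0 ≤ n then eeF n.toNat else 0

/-- The creation coefficients of `X⁺(z)`:
`exp (∑ ((1+q^{2n})q^{−n}/n)·p_n·zⁿ) = ∑_k HpF k · z^k`. -/
def HpF : ℕ → LamF := genFamF fun n => (1 + qq ^ (2*n)) * (qq⁻¹) ^ n

/-- `HpF` indexed by `ℤ`. -/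
def HZp (n : ℤ) : LamF := if 0 ≤ n then HpF n.toNat else 0

/-- The annihilation avatars for `X⁺(z)`: since
`(1+q^{2n})q^{−n}/n · a_n = q^{−n}·∂/∂p_n`, the coefficient of `z^{−j}` in
`exp (−∑ ((1+q^{2n})q^{−n}/n)·a_n·z^{−n})` is `ApF j` with `p_i ↦ i·∂/∂p_i`
substituted, where `∑_k ApF k t^k = exp (−∑ q^{−n} p_n tⁿ/n)`. -/
def ApF : ℕ → LamF := genFamF fun n => -((qq⁻¹) ^ n)

/-- The creation coefficients of `X⁻(z)`:
`exp (−∑ ((1+q^{2n})/n)·p_n·zⁿ) = ∑_k HmF k · z^k`. -/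
def HmF : ℕ → LamF := genFamF fun n => -(1 + qq ^ (2*n))

/-- `HmF` indexed by `ℤ`. -/
def HZm (n : ℤ) : LamF := if 0 ≤ n then HmF n.toNat else 0

/-- The differential operator `∏_i (i·∂/∂p_i)^(α i)`. -/
def monOpF (α : ℕ+ →₀ ℕ) : Module.End Fq LamF :=
  ((α.support.sort (· ≤ ·)).map fun (i : ℕ+) =>
    (((i : ℕ) : Fq) • (pderiv i).toLinearMap) ^ (α i)).prod

/-- `f(∂) P`: substitute `p_i ↦ i·∂/∂p_i` in `f` and apply to `P`. -/
def DopF (f : LamF) (P : LamF) : LamF := ∑ α ∈ f.support, f.coeff α • monOpF α P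

/-- Bound for the weighted degree of `P` (weight of `p_i` is `i`). -/
def wboundF (P : LamF) : ℕ := P.support.sup fun α => α.sum fun i k => (i : ℕ) * k

/-- The level-one Fock space `W_i = Λ_F ⊗ F[ℤα]e^{iα/2}`, realized as `ℤ →₀ Λ_F`;
`Finsupp.single m P` represents `P·e^{mα}e^{iα/2}`. -/
abbrev W : Type := ℤ →₀ LamF

/-- The Drinfeld current component `X_n^+` on `W_i` (the parameter `i ∈ {0,1}` enters
through `z^∂ e^{mα}e^{iα/2} = z^{2m+i} e^{mα}e^{iα/2}`): the coefficient of `z^{−n−1}` in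
`X⁺(z) = exp(∑((1+q^{2n})q^{−n}/n)a_{−n}zⁿ)·exp(−∑((1+q^{2n})q^{−n}/n)a_n z^{−n})·e^α z^∂`,
i.e. `X_n^+(P·e^{mα}) = ∑_j HpF_{j−n−1−2m−i} · (ApF j)(∂) P · e^{(m+1)α}`
(only the finitely many `j ≤ wboundF P` contribute). -/
def Xp (i n : ℤ) (w : W) : W :=
  w.sum fun m P => Finsupp.single (m+1)
    (∑ j ∈ Finset.range (wboundF P + 1),
      HZp ((j : ℤ) - n - 1 - 2*m - i) * DopF (ApF j) P)

/-- The Drinfeld current component `X_n^-` on `W_i`: the coefficient of `z^{−n−1}` in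
`X⁻(z) = exp(−∑((1+q^{2n})/n)a_{−n}zⁿ)·exp(∑((1+q^{2n})/n)a_n z^{−n})·e^{−α} z^{−∂}`,
i.e. `X_n^-(P·e^{mα}) = ∑_j HmF_{j+2m+i−n−1} · h_j(∂) P · e^{(m−1)α}`
(here `(1+q^{2n})/n · a_n = ∂/∂p_n`, whose generating family is `h`). -/
def Xm (i n : ℤ) (w : W) : W :=
  w.sum fun m P => Finsupp.single (m-1)
    (∑ j ∈ Finset.range (wboundF P + 1),
      HZm ((j : ℤ) + 2*m + i - n - 1) * DopF (hhF j) P)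

/-- The `q`-factorial `[r]! = ∏_{k=1}^r (q^k − q^{−k})/(q − q^{−1})`. -/
def qfact (r : ℕ) : Fq := ∏ k ∈ Finset.range r, (qq ^ (k+1) - (qq⁻¹) ^ (k+1)) / (qq - qq⁻¹)

/-- The divided power `x^{(r)} = x^r / [r]!` of an operator on `W`. -/
def divpow (f : W → W) (r : ℕ) (w : W) : W := (qfact r)⁻¹ • (f^[r] w)

/-- Schur function of an integer tuple: `s_ρ = det (h_{ρ_i − i + j})`. -/
def schurF {l : ℕ} (ρ : Fin l → ℤ) : LamF :=
  (Matrix.of fun i j : Fin l => hZF (ρ i - (i.1 : ℤ) + (j.1 : ℤ))).det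

/-- Dual Schur function of an integer tuple: `s_{ρ'} = det (e_{ρ_i − i + j})`. -/
def schurEF {l : ℕ} (ρ : Fin l → ℤ) : LamF :=
  (Matrix.of fun i j : Fin l => eZF (ρ i - (i.1 : ℤ) + (j.1 : ℤ))).det

/-- `q^{±∂}`: `q^{ε∂}(P·e^{mα}e^{iα/2}) = q^{ε(2m+i)}·P·e^{mα}e^{iα/2}`. -/
def qd (i ε : ℤ) (w : W) : W := w.sum fun m P => Finsupp.single m (qq ^ (ε * (2*m + i)) • P)

/-- The Chevalley generator `e₁ = X₀⁺`. -/
def che1 (i : ℤ) : W → W := Xp i 0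
/-- The Chevalley generator `f₁ = X₀⁻`. -/
def chf1 (i : ℤ) : W → W := Xm i 0
/-- The Chevalley generator `e₀ = X₁⁻ ∘ q^{−∂}`. -/
def che0 (i : ℤ) (w : W) : W := Xm i 1 (qd i (-1) w)
/-- The Chevalley generator `f₀ = q^∂ ∘ X₋₁⁺`. -/
def chf0 (i : ℤ) (w : W) : W := qd i 1 (Xp i (-1) w)


/-! ### Differential operators as Taylor coefficients -/

/-- The operator `i·∂/∂p_i`. -/
def dOp (i : ℕ+) : Module.End Fq LamF := ((i : ℕ) : Fq) • (pderiv i).toLinearMap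

lemma pderiv_pderiv_swap (i j : ℕ+) (P : LamF) :
    pderiv (R := Fq) i (pderiv j P) = pderiv j (pderiv i P) := by
  have h : ⁅(pderiv i : Derivation Fq LamF LamF), (pderiv j : Derivation Fq LamF LamF)⁆ = 0 := by
    apply MvPolynomial.derivation_ext
    intro k
    simp [Derivation.commutator_apply, pderiv_X, Pi.single_apply]
    split_ifs <;> simp
  have := congrArg (fun d : Derivation Fq LamF LamF => d P) h
  simpa [Derivation.commutator_apply, sub_eq_zero] using this

lemma dOp_comm (i j : ℕ+) : dOp i * dOp j = dOp j * dOp i := by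
  refine LinearMap.ext fun P => ?_
  simp only [dOp, Module.End.mul_apply, LinearMap.smul_apply, map_smul, Derivation.coeFn_coe]
  rw [pderiv_pderiv_swap i j, smul_comm]

/-- Substitution of the pairwise commuting operators `i·∂/∂p_i` for the variables, as an algebra
homomorphism into the (noncommutative) endomorphism algebra; it exists because the operators
generate a commutative subalgebra. -/
lemma exists_dHom : ∃ Φ : LamF →ₐ[Fq] Module.End Fq LamF,
    (∀ i, Φ (X i) = dOp i) ∧ ∀ f P, DopF f P = Φ f P := by
  have hc : ∀ a ∈ Set.range dOp, ∀ b ∈ Set.range dOp, a * b = b * a := by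
    rintro _ ⟨i, rfl⟩ _ ⟨j, rfl⟩
    exact dOp_comm i j
  have := Algebra.isMulCommutative_adjoin Fq hc
  let _ : CommRing (Algebra.adjoin Fq (Set.range dOp)) := by
    open scoped IsMulCommutative in exact inferInstance
  let g : ℕ+ → Algebra.adjoin Fq (Set.range dOp) :=
    fun i => ⟨dOp i, Algebra.subset_adjoin ⟨i, rfl⟩⟩
  let Ψ : LamF →ₐ[Fq] Algebra.adjoin Fq (Set.range dOp) := aeval g
  refine ⟨(Algebra.adjoin Fq (Set.range dOp)).val.comp Ψ, fun i => ?_, fun f P => ?_⟩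
  · simp [Ψ, g]
  · have hmon : ∀ α : ℕ+ →₀ ℕ, monOpF α =
        (Algebra.adjoin Fq (Set.range dOp)).val (α.prod fun i k => g i ^ k) := by
      intro α
      have : (α.prod fun i k => g i ^ k) =
          ((α.support.sort (· ≤ ·)).map fun i => g i ^ α i).prod := by
        rw [Finsupp.prod, Finset.prod_eq_multiset_prod, ← Multiset.prod_coe, ← Multiset.map_coe,
          Finset.sort_eq]
      rw [this, map_list_prod, List.map_map]
      rfl
    rw [DopF]
    have : Ψ f = ∑ α ∈ f.support, f.coeff α • (α.prod fun i k => g i ^ k) := by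
      simp only [Ψ, aeval_def, Algebra.smul_def, Finsupp.prod]
      exact eval₂_eq _ _ _
    rw [AlgHom.comp_apply, this, map_sum, LinearMap.sum_apply]
    refine Finset.sum_congr rfl fun α _ => ?_
    rw [hmon, map_smul, LinearMap.smul_apply]

/-- The translation `p_n ↦ p_n + c_n tⁿ`, i.e. the operator `exp (∑ c_n tⁿ ∂/∂p_n)`. -/
def shiftHom (c : ℕ → Fq) : LamF →ₐ[Fq] Polynomial LamF :=
  aeval fun n : ℕ+ => Polynomial.C (X n) + Polynomial.C (C (c n)) * Polynomial.X ^ (n : ℕ)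

/-- `∂/∂p_i` acting on the coefficients of a polynomial in `t`. -/
def coeffDer (i : ℕ+) : Derivation Fq (Polynomial LamF) (Polynomial LamF) :=
  (PolynomialModule.equivPolynomialSelf (R := LamF)).toLinearMap.compDer (pderiv i).mapCoeffs

lemma coeff_coeffDer (i : ℕ+) (f : Polynomial LamF) (k : ℕ) :
    (coeffDer i f).coeff k = pderiv i (f.coeff k) := rfl

lemma coeffDer_C (i : ℕ+) (P : LamF) :
    coeffDer i (Polynomial.C P) = Polynomial.C (pderiv i P) := by
  ext k : 1
  rw [coeff_coeffDer, Polynomial.coeff_C, Polynomial.coeff_C]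
  split_ifs <;> simp

lemma coeffDer_X (i : ℕ+) : coeffDer i Polynomial.X = 0 := by
  ext k : 1
  rw [coeff_coeffDer, Polynomial.coeff_X]
  split_ifs <;> simp

/-- The chain rule `d/dt (Θ P) = ∑ n c_n t^{n-1} ∂_n (Θ P)` for the translation `Θ`, modulo `t^M`
so that only finitely many `n` occur. -/
lemma shiftHom_ode (c : ℕ → Fq) (M : ℕ) (P : LamF) :
    (Polynomial.X : Polynomial LamF) ^ M ∣ Polynomial.derivative (shiftHom c P) -
      ∑ i ∈ Finset.range M, Polynomial.C (C (c (i+1) * ((i:Fq)+1))) * Polynomial.X ^ i *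
        coeffDer (Nat.succPNat i) (shiftHom c P) := by
  induction P using MvPolynomial.induction_on with
  | C a =>
    have : shiftHom c (C a) = Polynomial.C (C a) := by
      exact (shiftHom c).commutes a
    have h0 : ∀ i, coeffDer i (Polynomial.C (C a)) = 0 := fun i => by rw [coeffDer_C]; simp
    simp [this, h0]
  | add P Q hP hQ =>
    have := dvd_add hP hQ
    refine this.trans (dvd_of_eq ?_)
    simp only [map_add, mul_add, Finset.sum_add_distrib]
    ring
  | mul_X P n hP =>
    have hX : shiftHom c (X n) =
      Polynomial.C (X n) + Polynomial.C (C (c n)) * Polynomial.X ^ (n : ℕ) := by simp [shiftHom]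
    -- the generator itself: both sides agree if `n ≤ M`, and `t^M ∣ t^(n-1)` otherwise
    have h1 : (Polynomial.X : Polynomial LamF) ^ M ∣ Polynomial.derivative (shiftHom c (X n)) -
      ∑ i ∈ Finset.range M, Polynomial.C (C (c (i+1) * ((i:Fq)+1))) * Polynomial.X ^ i *
        coeffDer (Nat.succPNat i) (shiftHom c (X n)) := by
      have hd : ∀ i : ℕ, coeffDer (Nat.succPNat i) (shiftHom c (X n)) =
          if (i + 1 = n) then 1 else 0 := by
        intro i
        rw [hX, map_add, Derivation.leibniz, Derivation.leibniz_pow, coeffDer_X, coeffDer_C,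
          coeffDer_C, pderiv_X, pderiv_C]
        by_cases h : i + 1 = n
        · have : n = Nat.succPNat i := PNat.eq h.symm
          subst this
          simp
        · have : n ≠ (Nat.succPNat i) := fun h' => h (by rw [h']; rfl)
          simp [h, this]
      obtain ⟨k, hk⟩ : ∃ k : ℕ, (n : ℕ) = k + 1 := ⟨(n:ℕ) - 1, by have := n.pos; omega⟩
      have hder : Polynomial.derivative (shiftHom c (X n)) =
          Polynomial.C (C (c (k+1) * ((k:Fq)+1))) * Polynomial.X ^ k := by
        rw [hX, hk]
        simp [mul_assoc]
      simp only [hd, hder, hk, add_left_inj, mul_ite, mul_one, mul_zero, Finset.sum_ite_eq',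
        Finset.mem_range]
      split_ifs with h
      · simp
      · rw [sub_zero]
        exact (pow_dvd_pow _ (not_lt.mp h)).mul_left _
    have h2 := dvd_add (hP.mul_left (shiftHom c (X n))) (h1.mul_left (shiftHom c P))
    refine h2.trans (dvd_of_eq ?_)
    simp only [map_mul, Polynomial.derivative_mul, Derivation.leibniz, smul_eq_mul, mul_add,
      Finset.sum_add_distrib, mul_sub, Finset.mul_sum]
    have e1 : ∀ x y z w : Polynomial LamF, x * (y * z * w) = y * z * (x * w) := by intros; ring
    simp only [e1]
    ring

lemma genFamF_succ (c : ℕ → Fq) (k : ℕ) : ((k : Fq) + 1) • genFamF c (k+1) =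
    ∑ i ∈ Finset.range (k+1), c (i+1) • (ppF (Nat.succPNat i) * genFamF c (k - i)) := by
  rw [genFamF, smul_smul, mul_inv_cancel₀ (by exact_mod_cast Nat.succ_ne_zero k), one_smul]
  rfl

lemma genFamF_zero (c : ℕ → Fq) : genFamF c 0 = 1 := by rw [genFamF]

lemma coeff_shiftHom_zero (c : ℕ → Fq) (P : LamF) : (shiftHom c P).coeff 0 = P := by
  induction P using MvPolynomial.induction_on with
  | C a =>
    have : shiftHom c (C a) = Polynomial.C (C a) := by
      exact (shiftHom c).commutes a
    simp [this]
  | add P Q hP hQ => simp [hP, hQ]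
  | mul_X P n hP =>
    rw [map_mul, Polynomial.mul_coeff_zero, hP]
    have := n.pos
    simp [shiftHom, this.ne]

/-- Taylor's formula: the operators obtained from `exp (∑ c_n p_n tⁿ/n)` by `p_n ↦ n·∂/∂p_n`
are the coefficients of the translation `p_n ↦ p_n + c_n tⁿ`. -/
lemma DopF_genFamF (c : ℕ → Fq) (j : ℕ) (P : LamF) :
    DopF (genFamF c j) P = (shiftHom c P).coeff j := by
  obtain ⟨Φ, hΦX, hΦ⟩ := exists_dHom
  rw [hΦ]
  induction j using Nat.strong_induction_on with
  | _ j ih =>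
    rcases j with _ | k
    · simp [genFamF_zero, coeff_shiftHom_zero]
    · have hk : ((k : Fq) + 1) ≠ 0 := by exact_mod_cast Nat.succ_ne_zero k
      apply smul_right_injective LamF hk
      have hode := shiftHom_ode c (k+1) P
      rw [Polynomial.X_pow_dvd_iff] at hode
      have := hode k (Nat.lt_succ_self k)
      rw [Polynomial.coeff_sub, sub_eq_zero, Polynomial.coeff_derivative,
        Polynomial.finsetSum_coeff] at this
      have e : ((k : Fq) + 1) • (shiftHom c P).coeff (k+1) =
          (shiftHom c P).coeff (k+1) * ((k : LamF) + 1) := by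
        rw [Algebra.smul_def, mul_comm]; simp
      simp only
      rw [e, this, ← LinearMap.smul_apply, ← map_smul, genFamF_succ, map_sum, LinearMap.sum_apply]
      refine Finset.sum_congr rfl fun i hi => ?_
      rw [Finset.mem_range] at hi
      rw [map_smul, map_mul, LinearMap.smul_apply, Module.End.mul_apply, ih _ (by omega),
        show ppF (Nat.succPNat i) = X (Nat.succPNat i) from rfl, hΦX]
      rw [mul_assoc, Polynomial.coeff_C_mul, Polynomial.coeff_X_pow_mul', if_pos (by omega),
        coeff_coeffDer, dOp, LinearMap.smul_apply, smul_smul, C_mul']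
      simp

/-! ### Generating series of `h` -/

/-- A power series is determined by its constant term and a linear ODE `G' = P G`. -/
lemma ode_unique {A : Type*} [CommRing A] [Algebra Fq A] (P G₁ G₂ : PowerSeries A)
    (h0 : PowerSeries.coeff 0 G₁ = PowerSeries.coeff 0 G₂)
    (h1 : PowerSeries.derivative A G₁ = P * G₁) (h2 : PowerSeries.derivative A G₂ = P * G₂) :
    G₁ = G₂ := by
  ext k
  induction k using Nat.strong_induction_on with
  | _ k ih =>
    rcases k with _ | k
    · exact h0
    · have e1 := congrArg (PowerSeries.coeff k) h1
      have e2 := congrArg (PowerSeries.coeff k) h2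
      rw [PowerSeries.coeff_derivative, PowerSeries.coeff_mul] at e1 e2
      have e3 : PowerSeries.coeff (k+1) G₁ * ((k : A) + 1) =
          PowerSeries.coeff (k+1) G₂ * ((k : A) + 1) := by
        rw [e1, e2]
        refine Finset.sum_congr rfl fun ij hij => ?_
        rw [Finset.HasAntidiagonal.mem_antidiagonal] at hij
        rw [ih ij.2 (by omega)]
      have hu : IsUnit ((k : A) + 1) := by
        have : IsUnit ((k : Fq) + 1) := by
          rw [isUnit_iff_ne_zero]; exact_mod_cast Nat.succ_ne_zero k
        simpa using this.map (algebraMap Fq A)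
      exact hu.mul_right_cancel e3

/-- `∑ c_{i+1} p_{i+1} t^i`, the logarithmic derivative of `exp (∑ c_n p_n tⁿ/n)`. -/
def logDerSeries (c : ℕ → Fq) : PowerSeries LamF :=
  PowerSeries.mk fun i => c (i+1) • ppF (Nat.succPNat i)

lemma genFamF_ode (c : ℕ → Fq) :
    PowerSeries.derivative LamF (PowerSeries.mk (genFamF c)) =
      logDerSeries c * PowerSeries.mk (genFamF c) := by
  ext k : 1
  rw [PowerSeries.coeff_derivative, PowerSeries.coeff_mul, PowerSeries.coeff_mk,
    Finset.Nat.sum_antidiagonal_eq_sum_range_succ_mk]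
  have := genFamF_succ c k
  rw [Algebra.smul_def, mul_comm] at this
  simp only [map_add, map_natCast, map_one] at this
  rw [this]
  refine Finset.sum_congr rfl fun i _ => ?_
  simp [logDerSeries]

lemma genFamF_add (c d : ℕ → Fq) : PowerSeries.mk (genFamF fun n => c n + d n) =
    PowerSeries.mk (genFamF c) * PowerSeries.mk (genFamF d) := by
  refine ode_unique (logDerSeries fun n => c n + d n) _ _ ?_ (genFamF_ode _) ?_
  · simp [PowerSeries.coeff_mul, genFamF_zero]
  · have : logDerSeries (fun n => c n + d n) = logDerSeries c + logDerSeries d := by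
      ext k : 1; simp [logDerSeries, add_smul]
    rw [Derivation.leibniz, genFamF_ode, genFamF_ode, this]
    simp only [smul_eq_mul]
    ring

lemma genFamF_scale (x : Fq) (k : ℕ) : genFamF (fun n => x ^ n) k = x ^ k • hhF k := by
  suffices h : PowerSeries.mk (genFamF fun n => x ^ n) = PowerSeries.mk fun k => x ^ k • hhF k by
    simpa using congrArg (PowerSeries.coeff k) h
  refine ode_unique (logDerSeries fun n => x ^ n) _ _ ?_ (genFamF_ode _) ?_
  · simp [genFamF_zero, hhF]
  · ext k : 1
    rw [PowerSeries.coeff_derivative, PowerSeries.coeff_mul, PowerSeries.coeff_mk,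
      Finset.Nat.sum_antidiagonal_eq_sum_range_succ_mk]
    have := genFamF_succ (fun _ => 1) k
    rw [Algebra.smul_def, mul_comm] at this
    simp only [map_add, map_natCast, map_one] at this
    rw [smul_mul_assoc, hhF, this, Finset.smul_sum]
    refine Finset.sum_congr rfl fun i hi => ?_
    rw [Finset.mem_range] at hi
    simp only [logDerSeries, PowerSeries.coeff_mk, one_smul, smul_mul_smul_comm, ← pow_add]
    congr 2
    omega

lemma hZF_neg {n : ℤ} (h : n < 0) : hZF n = 0 := by rw [hZF, if_neg (by omega)]

lemma hZF_natCast (n : ℕ) : hZF (n : ℤ) = hhF n := by simp [hZF]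

lemma qq_ne_zero : qq ≠ 0 := RatFunc.X_ne_zero

/-- `exp (∑ (1+q^{2n})q^{-n} p_n zⁿ/n) = H(q⁻¹z) H(qz)`. -/
lemma HpF_eq (k : ℕ) : HpF k =
    ∑ a ∈ Finset.range (k+1), qq ^ ((k : ℤ) - 2 * a) • (hhF a * hhF (k - a)) := by
  have h := congrArg (PowerSeries.coeff k) (genFamF_add (fun n => (qq⁻¹) ^ n) (fun n => qq ^ n))
  rw [PowerSeries.coeff_mul, Finset.Nat.sum_antidiagonal_eq_sum_range_succ_mk] at h
  simp only [PowerSeries.coeff_mk, genFamF_scale] at h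
  have e : HpF k = genFamF (fun n => (qq⁻¹) ^ n + qq ^ n) k := by
    rw [HpF]
    congr 1
    funext n
    have h1 : qq ^ n * qq⁻¹ ^ n = 1 := by
      rw [← mul_pow, mul_inv_cancel₀ qq_ne_zero, one_pow]
    linear_combination qq ^ n * h1
  rw [e, h]
  refine Finset.sum_congr rfl fun a ha => ?_
  rw [Finset.mem_range] at ha
  rw [smul_mul_smul_comm]
  congr 1
  rw [inv_pow, ← zpow_natCast, ← zpow_natCast, ← zpow_neg, ← zpow_add₀ qq_ne_zero]
  congr 1
  push_cast [Nat.le_of_lt_succ ha]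
  ring

/-- `exp (∑ (1+q^{2n})q^{-n} p_n zⁿ/n) = H(q⁻¹z) H(qz)`, in coefficients. -/
lemma HZp_eq (n : ℤ) : HZp n = ∑ᶠ a : ℤ, qq ^ (n - 2 * a) • (hZF a * hZF (n - a)) := by
  rcases lt_or_ge n 0 with hn | hn
  · rw [HZp, if_neg (by omega), finsum_eq_zero_of_forall_eq_zero]
    intro a
    rcases lt_or_ge a 0 with ha | ha
    · simp [hZF_neg ha]
    · simp [hZF_neg (show n - a < 0 by omega)]
  · lift n to ℕ using hn
    rw [HZp, if_pos (by omega), Int.toNat_natCast, HpF_eq]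
    rw [finsum_eq_finsetSum_of_support_subset (s := (Finset.range (n+1)).map Nat.castEmbedding)]
    · rw [Finset.sum_map]
      refine Finset.sum_congr rfl fun a ha => ?_
      rw [Finset.mem_range] at ha
      simp only [Nat.castEmbedding_apply]
      rw [hZF_natCast, show (n : ℤ) - a = ((n - a : ℕ) : ℤ) by omega, hZF_natCast]
    · intro a ha
      rw [Function.mem_support] at ha
      have h1 : 0 ≤ a := by by_contra h; exact ha (by simp [hZF_neg (not_le.mp h)])
      have h2 : 0 ≤ (n : ℤ) - a := by by_contra h; exact ha (by simp [hZF_neg (not_le.mp h)])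
      simp only [Finset.coe_map, Set.mem_image, Finset.coe_range, Set.mem_Iio]
      exact ⟨a.toNat, by omega, by simp [h1]⟩

lemma HZp_support_finite (n : ℤ) :
    (fun a : ℤ => qq ^ (n - 2 * a) • (hZF a * hZF (n - a))).HasFiniteSupport := by
  refine (Set.finite_Icc 0 n).subset fun a ha => ?_
  rw [Function.mem_support] at ha
  have h1 : 0 ≤ a := by by_contra h; exact ha (by simp [hZF_neg (not_le.mp h)])
  have h2 : 0 ≤ n - a := by by_contra h; exact ha (by simp [hZF_neg (not_le.mp h)])
  exact ⟨h1, by omega⟩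

/-- `E^⊥(-q⁻¹t) = exp (-∑ q^{-n} tⁿ ∂/∂p_n)` as the ring homomorphism `p_n ↦ p_n - q^{-n}tⁿ`. -/
abbrev thetaHom : LamF →ₐ[Fq] Polynomial LamF := shiftHom fun n => -((qq⁻¹) ^ n)

/-- The variable `q⁻¹t`. -/
def tq : Polynomial LamF := Polynomial.C (C qq⁻¹) * Polynomial.X

/-- Multiplying a solution of `G' = P G` by `1 - tu` subtracts `∑ t^{k+1}u^k` from `P`. -/
lemma ode_mul_one_sub {A : Type*} [CommRing A] (t : A) (P G : PowerSeries A)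
    (hG : PowerSeries.derivative A G = P * G) :
    PowerSeries.derivative A ((1 - PowerSeries.C t * PowerSeries.X) * G) =
      (P - PowerSeries.mk fun k => t ^ (k+1)) * ((1 - PowerSeries.C t * PowerSeries.X) * G) := by
  have hgeo : PowerSeries.mk (fun k => t ^ (k+1)) * (1 - PowerSeries.C t * PowerSeries.X) =
      PowerSeries.C t := by
    ext k : 1
    rw [mul_sub, mul_one, mul_comm (PowerSeries.C t), ← mul_assoc, map_sub,
      PowerSeries.coeff_mul_C]
    rcases k with _ | k
    · simp
    · rw [PowerSeries.coeff_succ_mul_X, PowerSeries.coeff_mk, PowerSeries.coeff_mk,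
        PowerSeries.coeff_C, if_neg (by omega), pow_succ _ (k+1), sub_self]
  have e2 : PowerSeries.derivative A (1 - PowerSeries.C t * PowerSeries.X) =
      - PowerSeries.C t := by
    rw [map_sub, Derivation.leibniz, PowerSeries.derivative_C, PowerSeries.derivative_X]
    simp
  rw [Derivation.leibniz, hG, e2]
  simp only [smul_eq_mul]
  linear_combination G * hgeo

lemma thetaHom_hseries :
    PowerSeries.mk (fun k => thetaHom (hhF k)) =
      (1 - PowerSeries.C tq * PowerSeries.X) *
        PowerSeries.mk (fun k => (Polynomial.C (hhF k) : Polynomial LamF)) := by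
  have hmap : ∀ φ : LamF →+* Polynomial LamF,
      PowerSeries.derivative _ (PowerSeries.mk (fun k => φ (hhF k))) =
      PowerSeries.mk (fun k => φ (ppF (Nat.succPNat k))) *
        PowerSeries.mk (fun k => φ (hhF k)) := by
    intro φ
    ext k : 1
    have := congrArg (fun f => φ (PowerSeries.coeff k f)) (genFamF_ode fun _ => 1)
    simp only [PowerSeries.coeff_derivative, PowerSeries.coeff_mul, map_mul, map_sum,
      PowerSeries.coeff_mk, logDerSeries, one_smul, map_add, map_natCast, map_one] at this
    simpa only [hhF, PowerSeries.coeff_derivative, PowerSeries.coeff_mul, PowerSeries.coeff_mk] using this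
  have hp : PowerSeries.mk (fun k => thetaHom (ppF (Nat.succPNat k))) =
      PowerSeries.mk (fun k => (Polynomial.C (ppF (Nat.succPNat k)) : Polynomial LamF)) -
        PowerSeries.mk (fun k => tq ^ (k+1)) := by
    ext k : 1
    simp only [map_sub, PowerSeries.coeff_mk]
    have : thetaHom (ppF (Nat.succPNat k)) = Polynomial.C (ppF (Nat.succPNat k)) +
        Polynomial.C (C (-(qq⁻¹ ^ (k+1)))) * Polynomial.X ^ (k+1) := by
      simp [thetaHom, shiftHom, ppF]
    rw [this, tq, mul_pow, ← Polynomial.C_pow, ← C_pow, C_neg, Polynomial.C_neg]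
    ring
  refine ode_unique _ _ _ ?_ (hmap thetaHom.toRingHom) ?_
  · simp [hhF, genFamF_zero]
  · have hp' : PowerSeries.mk (fun k => thetaHom.toRingHom (ppF (Nat.succPNat k))) = _ := hp
    rw [hp']
    exact ode_mul_one_sub tq _ _ (hmap Polynomial.C)

/-- `e_j^⊥ h_a` is `h_a`, `h_{a-1}`, `0` for `j = 0`, `j = 1`, `j ≥ 2`. -/
lemma thetaHom_hZF (a : ℤ) : thetaHom (hZF a) =
    Polynomial.C (hZF a) - tq * Polynomial.C (hZF (a-1)) := by
  rcases lt_or_ge a 0 with ha | ha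
  · simp [hZF_neg ha, hZF_neg (show a - 1 < 0 by omega)]
  · lift a to ℕ using ha
    have h := congrArg (PowerSeries.coeff a) thetaHom_hseries
    rw [sub_mul, one_mul, map_sub, mul_assoc, PowerSeries.coeff_C_mul] at h
    rw [hZF_natCast]
    rcases a with _ | a
    · simpa [hZF_neg] using h
    · rw [PowerSeries.coeff_succ_X_mul] at h
      rw [show ((a + 1 : ℕ) : ℤ) - 1 = (a : ℤ) by push_cast; ring, hZF_natCast]
      simpa using h

/-! ### Bernstein operators -/

/-- The `Λ`-linear functional `t^j ↦ w j` on `Λ[t]`. -/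
def wsum (w : ℕ → LamF) : Polynomial LamF →ₗ[LamF] LamF :=
  Polynomial.lsum fun j => LinearMap.mulLeft LamF (w j)

lemma wsum_apply (w : ℕ → LamF) (f : Polynomial LamF) :
    wsum w f = f.sum fun j c => w j * c := rfl

lemma wsum_C_mul (w : ℕ → LamF) (c : LamF) (f : Polynomial LamF) :
    wsum w (Polynomial.C c * f) = c * wsum w f := by
  rw [Polynomial.C_mul', map_smul, smul_eq_mul]

lemma wsum_monomial (w : ℕ → LamF) (j : ℕ) (c : LamF) :
    wsum w (Polynomial.monomial j c) = w j * c := by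
  rw [wsum_apply, Polynomial.sum_monomial_index _ _ (by simp)]

lemma wsum_X_mul (w : ℕ → LamF) (f : Polynomial LamF) :
    wsum w (Polynomial.X * f) = wsum (fun j => w (j+1)) f := by
  induction f using Polynomial.induction_on' with
  | add f g hf hg => rw [mul_add, map_add, map_add, hf, hg]
  | monomial n a => rw [Polynomial.X_mul_monomial, wsum_monomial, wsum_monomial]

/-- The Bernstein creation operator `B_b = ∑_j (-1)^j h_{b+j} e_j^⊥`; the coefficient of `t^j` in
`thetaHom P` is `(-q)^{-j} e_j^⊥ P`. -/
def bern (b : ℤ) : LamF →ₗ[Fq] LamF :=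
  (wsum fun j => qq ^ j • hZF (b + j)).restrictScalars Fq ∘ₗ thetaHom.toLinearMap

lemma bern_apply (b : ℤ) (P : LamF) :
    bern b P = wsum (fun j => qq ^ j • hZF (b + j)) (thetaHom P) := rfl

lemma wsum_tq_mul (b : ℤ) (f : Polynomial LamF) :
    wsum (fun j => qq ^ j • hZF (b + j)) (tq * f) =
      wsum (fun j => qq ^ j • hZF (b + 1 + j)) f := by
  rw [tq, mul_assoc, wsum_C_mul, wsum_X_mul, wsum_apply, wsum_apply, Polynomial.sum_def,
    Polynomial.sum_def, Finset.mul_sum]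
  refine Finset.sum_congr rfl fun j _ => ?_
  rw [← mul_assoc, C_mul', smul_smul, pow_succ', inv_mul_cancel_left₀ qq_ne_zero]
  congr 3
  push_cast; ring

lemma wsum_tq_pow_mul (b : ℤ) (k : ℕ) (f : Polynomial LamF) :
    wsum (fun j => qq ^ j • hZF (b + j)) (tq ^ k * f) =
      wsum (fun j => qq ^ j • hZF (b + k + j)) f := by
  induction k generalizing b with
  | zero => simp
  | succ k ih =>
    rw [pow_succ', mul_assoc, wsum_tq_mul, ih]
    push_cast
    rw [add_assoc b, add_comm 1 (k : ℤ)]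

/-- Commutation of `B_b` with multiplication by `h_a`. -/
lemma bern_hZF_mul (b a : ℤ) (P : LamF) :
    bern b (hZF a * P) = hZF a * bern b P - hZF (a - 1) * bern (b + 1) P := by
  rw [bern_apply, map_mul, thetaHom_hZF, sub_mul, map_sub, wsum_C_mul, mul_assoc, wsum_tq_mul,
    wsum_C_mul]
  rfl

/-- Moving `B_b` past a product of `h`'s: each factor is either kept or, with a sign, lowered by one
while the index of `B` is raised. -/
lemma bern_prod_mul {ι : Type*} [DecidableEq ι] (s : Finset ι) (a : ι → ℤ) (b : ℤ) (P : LamF) :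
    bern b ((∏ k ∈ s, hZF (a k)) * P) = ∑ I ∈ s.powerset, (-1 : Fq) ^ I.card •
      ((∏ k ∈ s, hZF (a k - if k ∈ I then 1 else 0)) * bern (b + I.card) P) := by
  induction s using Finset.induction_on generalizing b with
  | empty => simp
  | insert x s hx ih =>
    rw [Finset.prod_insert hx, mul_assoc, bern_hZF_mul, ih, ih, Finset.sum_powerset_insert hx,
      sub_eq_add_neg, Finset.mul_sum, Finset.mul_sum, ← Finset.sum_neg_distrib]
    congr 1
    · refine Finset.sum_congr rfl fun I hI => ?_
      have hxI : x ∉ I := fun h => hx (Finset.mem_powerset.mp hI h)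
      rw [Finset.prod_insert hx, if_neg hxI, sub_zero, mul_smul_comm, mul_assoc]
    · refine Finset.sum_congr rfl fun I hI => ?_
      have hxI : x ∉ I := fun h => hx (Finset.mem_powerset.mp hI h)
      rw [Finset.prod_insert hx, if_pos (Finset.mem_insert_self x I), Finset.card_insert_of_notMem hxI,
        mul_smul_comm, pow_succ, mul_neg_one, neg_smul, mul_assoc]
      congr 4
      · refine Finset.prod_congr rfl fun k hk => ?_
        have : k ≠ x := fun h => hx (h ▸ hk)
        simp [this]
      · push_cast
        rw [add_assoc, add_comm (1 : ℤ)]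

/-- `B_b s_ρ = s_{(b,ρ)}` for arbitrary integer tuples. -/
lemma bern_schurF {l : ℕ} (b : ℤ) (ρ : Fin l → ℤ) :
    bern b (schurF ρ) = schurF (Fin.cons b ρ : Fin (l+1) → ℤ) := by
  -- the last `l` rows of the matrix of `s_{(b,ρ)}`
  let M : Fin l → Fin (l+1) → LamF := fun i j => hZF (ρ i - ((i.1 : ℤ) + 1) + j.1)
  have hθ : thetaHom (schurF ρ) = ∑ k : Fin (l+1), Polynomial.C ((-1) ^ k.1) * (tq ^ k.1 *
      Polynomial.C (Matrix.det (Matrix.of fun i j => M i (k.succAbove j)))) := by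
    let A : Matrix (Fin (l+1)) (Fin (l+1)) (Polynomial LamF) :=
      Matrix.of (Fin.cons (fun j => tq ^ j.1) fun i j => Polynomial.C (M i j))
    let B : Matrix (Fin (l+1)) (Fin (l+1)) (Polynomial LamF) :=
      Matrix.of (Fin.cons (fun j => if j = 0 then 1 else 0) fun i =>
        Fin.cons (Polynomial.C (M i 0)) fun j =>
          Polynomial.C (M i j.succ) - tq * Polynomial.C (M i j.castSucc))
    -- subtracting `tq` times the previous column clears the first row `1, tq, tq², …`
    have hAB : A.det = B.det := by
      refine Matrix.det_eq_of_forall_col_eq_smul_add_pred (fun _ => tq) ?_ ?_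
      · intro i
        refine Fin.cases ?_ (fun i => ?_) i <;> simp [A, B]
      · intro i j
        refine Fin.cases ?_ (fun i => ?_) i
        · simp [A, B, pow_succ']
        · simp [A, B]
    have hB : B.det = thetaHom (schurF ρ) := by
      rw [Matrix.det_succ_row_zero, Finset.sum_eq_single 0]
      · have e : ∀ f : LamF →+* Polynomial LamF, f (schurF ρ) = _ := fun f => f.map_det _
        have := e thetaHom.toRingHom
        rw [show thetaHom (schurF ρ) = _ from this]
        simp only [B, Matrix.of_apply, Fin.cons_zero, if_true, Fin.val_zero, pow_zero, one_mul]
        congr 1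
        refine Matrix.ext fun i j => ?_
        rw [RingHom.mapMatrix_apply, Matrix.map_apply, Matrix.of_apply]
        refine Eq.trans ?_ (thetaHom_hZF _).symm
        simp only [Matrix.submatrix_apply, Matrix.of_apply, Fin.cons_succ, Fin.zero_succAbove, M,
          Fin.val_succ, Fin.val_castSucc]
        rw [show ρ i - ((i.1 : ℤ) + 1) + ((j.1 + 1 : ℕ) : ℤ) = ρ i - i.1 + j.1 by push_cast; ring,
          show ρ i - ((i.1 : ℤ) + 1) + (j.1 : ℤ) = ρ i - i.1 + j.1 - 1 by ring]
      · intro j _ hj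
        simp [B, hj]
      · simp
    rw [← hB, ← hAB, Matrix.det_succ_row_zero]
    refine Finset.sum_congr rfl fun k _ => ?_
    rw [RingHom.map_det, map_pow, map_neg, map_one, mul_assoc]
    rfl
  rw [bern_apply, hθ, map_sum, schurF, Matrix.det_succ_row_zero]
  refine Finset.sum_congr rfl fun k _ => ?_
  rw [wsum_C_mul, wsum_tq_pow_mul, ← Polynomial.monomial_zero_left, wsum_monomial, mul_assoc]
  simp only [Matrix.of_apply, Fin.cons_zero, Fin.val_zero, pow_zero, one_smul, Nat.cast_zero,
    sub_zero, add_zero]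
  congr 3

/-! ### The current `X_n^+` -/

lemma natDegree_thetaHom_le (P : LamF) : (thetaHom P).natDegree ≤ wboundF P := by
  rw [thetaHom, shiftHom, aeval_def, eval₂_eq]
  refine Polynomial.natDegree_sum_le_of_forall_le _ _ fun α hα => ?_
  have h : (α.sum fun i k => (i : ℕ) * k) ≤ wboundF P :=
    Finset.le_sup (f := fun α : ℕ+ →₀ ℕ => α.sum fun i k => (i : ℕ) * k) hα
  refine le_trans ?_ h
  refine (Polynomial.natDegree_C_mul_le (C (P.coeff α)) _).trans ?_
  refine (Polynomial.natDegree_prod_le _ _).trans (Finset.sum_le_sum fun i _ => ?_)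
  refine Polynomial.natDegree_pow_le.trans ?_
  rw [mul_comm]
  refine Nat.mul_le_mul_right _ ?_
  refine Polynomial.natDegree_add_le_of_degree_le ?_ ?_
  · simp
  · exact Polynomial.natDegree_C_mul_X_pow_le _ _

/-- `X_n^+` on the component `e^{mα}e^{iα/2}`, where `N = n+1+2m+i`. -/
def curr (N : ℤ) : LamF →ₗ[Fq] LamF :=
  (wsum fun j => HZp (j - N)).restrictScalars Fq ∘ₗ thetaHom.toLinearMap

lemma Xp_single (i n m : ℤ) (P : LamF) :
    Xp i n (Finsupp.single m P) = Finsupp.single (m+1) (curr (n + 1 + 2*m + i) P) := by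
  rw [Xp, Finsupp.sum_single_index]
  · congr 1
    change _ = wsum _ (thetaHom P)
    rw [wsum_apply, Polynomial.sum_over_range' _ _ (wboundF P + 1)
      (Nat.lt_succ_of_le (natDegree_thetaHom_le P))]
    · refine Finset.sum_congr rfl fun j _ => ?_
      rw [ApF, DopF_genFamF]
      congr 2
      ring
    · simp
  · rw [Finset.sum_eq_zero, Finsupp.single_zero]
    intro j _
    rw [ApF, DopF_genFamF]
    simp

/-- `X^+(z) = H(q⁻¹z) B(qz)`, in coefficients. -/
lemma curr_eq (N : ℤ) (P : LamF) :
    (fun a : ℤ => qq ^ (-N - 2 * a) • (hZF a * bern (-N - a) P)).HasFiniteSupport ∧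
    curr N P = ∑ᶠ a : ℤ, qq ^ (-N - 2 * a) • (hZF a * bern (-N - a) P) := by
  have hb : (fun a : ℤ => qq ^ (-N - 2 * a) • (hZF a * bern (-N - a) P)) = fun a =>
      ∑ j ∈ (thetaHom P).support,
        (qq ^ ((j : ℤ) - N - 2 * a) • (hZF a * hZF (j - N - a))) * (thetaHom P).coeff j := by
    funext a
    rw [bern_apply, wsum_apply, Polynomial.sum_def, Finset.mul_sum, Finset.smul_sum]
    refine Finset.sum_congr rfl fun j _ => ?_
    rw [show (j : ℤ) - N - 2 * a = -N - 2 * a + j by ring, zpow_add₀ qq_ne_zero, zpow_natCast,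
      show (j : ℤ) - N - a = -N - a + j by ring]
    simp only [smul_mul_assoc, mul_smul_comm, mul_smul, mul_assoc]
  have hf : ∀ j ∈ (thetaHom P).support, (fun a : ℤ =>
      (qq ^ ((j : ℤ) - N - 2 * a) • (hZF a * hZF (j - N - a))) *
        (thetaHom P).coeff j).HasFiniteSupport := fun j _ =>
    (HZp_support_finite (j - N)).subset fun a ha => by
      rw [Function.mem_support] at ha ⊢
      exact left_ne_zero_of_mul ha
  constructor
  · rw [hb]
    refine (Set.Finite.biUnion (thetaHom P).support.finite_toSet hf).subset ?_
    intro a ha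
    obtain ⟨j, hj, h⟩ := Finset.exists_ne_zero_of_sum_ne_zero ha
    exact Set.mem_biUnion hj h
  · rw [hb, finsum_sum_comm _ _ hf]
    change wsum _ (thetaHom P) = _
    rw [wsum_apply, Polynomial.sum_def]
    refine Finset.sum_congr rfl fun j _ => ?_
    rw [HZp_eq, finsum_mul' _ _ (HZp_support_finite _)]

/-! ### The alternating functions `altS` and `altK` -/

/-- `s_{(c,μ)}` with `c_k = -N - x_k - (r-1-k)`, a function that is alternating in `x`. -/
def altS (N : ℤ) {l : ℕ} (μ : Fin l → ℤ) {r : ℕ} (x : Fin r → ℤ) : LamF :=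
  schurF (Fin.append (fun k : Fin r => -N - x k - ((r : ℤ) - 1 - k.1)) μ)

/-- The matrix of `s_{(c,μ)}` with rows indexed by a disjoint union: in the first `r` rows the row
number enters only through `x`. -/
lemma altS_eq_det (N : ℤ) {l : ℕ} (μ : Fin l → ℤ) {r : ℕ} (x : Fin r → ℤ) :
    altS N μ x = (Matrix.of fun (p q : Fin r ⊕ Fin l) =>
      Sum.elim (fun k => hZF (-N - x k - ((r : ℤ) - 1) + (finSumFinEquiv q).1))
        (fun k => hZF (μ k - (r + k.1) + (finSumFinEquiv q).1)) p).det := by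
  rw [altS, schurF, ← Matrix.det_submatrix_equiv_self finSumFinEquiv]
  congr 1
  refine Matrix.ext fun p q => ?_
  rcases p with p | p
  · simp only [Matrix.submatrix_apply, Matrix.of_apply, finSumFinEquiv_apply_left,
      Fin.append_left, Sum.elim_inl, Fin.val_castAdd]
    rw [show -N - x p - ((r : ℤ) - 1 - p.1) - p.1 = -N - x p - ((r : ℤ) - 1) by ring]
  · simp only [Matrix.submatrix_apply, Matrix.of_apply, finSumFinEquiv_apply_right,
      Fin.append_right, Sum.elim_inr, Fin.val_natAdd, Nat.cast_add]

lemma altS_perm (N : ℤ) {l : ℕ} (μ : Fin l → ℤ) {r : ℕ} (x : Fin r → ℤ)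
    (σ : Equiv.Perm (Fin r)) :
    altS N μ (x ∘ σ) = ((Equiv.Perm.sign σ : ℤ) : LamF) * altS N μ x := by
  rw [altS_eq_det, altS_eq_det, ← mul_one (Equiv.Perm.sign σ),
    ← Equiv.Perm.sign_one (α := Fin l), ← Equiv.Perm.sign_sumCongr, ← Matrix.det_permute]
  congr 1
  refine Matrix.ext fun p q => ?_
  rcases p with p | p <;> simp

lemma eq_zero_of_alternating {r : ℕ} (f : (Fin r → ℤ) → LamF)
    (hf : ∀ x (σ : Equiv.Perm (Fin r)), f (x ∘ σ) = ((Equiv.Perm.sign σ : ℤ) : LamF) * f x)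
    (x : Fin r → ℤ) {i j : Fin r} (hij : i ≠ j) (h : x i = x j) : f x = 0 := by
  have h1 := hf x (Equiv.swap i j)
  have h2 : x ∘ Equiv.swap i j = x := by
    funext k
    simp only [Function.comp_apply, Equiv.swap_apply_def]
    split_ifs with ha hb
    · rw [ha, h]
    · rw [hb, h]
    · rfl
  rw [h2, Equiv.Perm.sign_swap hij] at h1
  simp only [Units.val_neg, Units.val_one, Int.cast_neg, Int.cast_one, neg_one_mul] at h1
  have h3 : (2 : LamF) * f x = 0 := by rw [two_mul]; nth_rw 1 [h1]; exact neg_add_cancel _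
  rcases mul_eq_zero.mp h3 with h4 | h4
  · exact absurd h4 (by norm_num)
  · exact h4

/-- `s_ρ` has degree `|ρ|`, hence vanishes when `|ρ| < 0`. -/
lemma schurF_eq_zero {l : ℕ} (ρ : Fin l → ℤ) (h : ∑ k, ρ k < 0) : schurF ρ = 0 := by
  rw [schurF, Matrix.det_apply]
  refine Finset.sum_eq_zero fun σ _ => ?_
  have : ∃ i ∈ Finset.univ, ρ (σ i) - ((σ i).1 : ℤ) + i.1 < 0 := by
    refine Finset.exists_lt_of_sum_lt (g := fun _ => (0 : ℤ)) ?_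
    rw [Finset.sum_add_distrib, Equiv.sum_comp σ fun i => ρ i - (i.1 : ℤ), Finset.sum_sub_distrib]
    simpa using h
  obtain ⟨i, _, hi⟩ := this
  rw [Finset.prod_eq_zero (Finset.mem_univ i), smul_zero]
  exact hZF_neg hi

/-- The summand `q^{-2|a|} h_a altS(a+s)` of `altK`. -/
def altT (N : ℤ) {l : ℕ} (μ : Fin l → ℤ) {r : ℕ} (s a : Fin r → ℤ) : LamF :=
  qq ^ (-2 * ∑ k, a k) • ((∏ k, hZF (a k)) * altS N μ (a + s))

/-- `∑_{a ∈ ℤ^r} q^{-2|a|} h_a altS(a+s)`. -/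
def altK (N : ℤ) {l : ℕ} (μ : Fin l → ℤ) {r : ℕ} (s : Fin r → ℤ) : LamF :=
  ∑ᶠ a : Fin r → ℤ, altT N μ s a

lemma altT_nonneg {N : ℤ} {l : ℕ} {μ : Fin l → ℤ} {r : ℕ} {s a : Fin r → ℤ}
    (h : altT N μ s a ≠ 0) (k : Fin r) : 0 ≤ a k := by
  by_contra hk
  refine h ?_
  rw [altT, Finset.prod_eq_zero (Finset.mem_univ k) (hZF_neg (not_le.mp hk)), zero_mul, smul_zero]

/-- A nonzero summand has `a ≥ 0` and, by `schurF_eq_zero`, `|a|` bounded above. -/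
lemma altT_support (N : ℤ) {l : ℕ} (μ : Fin l → ℤ) {r : ℕ} (s : Fin r → ℤ) :
    (altT N μ s).HasFiniteSupport := by
  set M : ℤ := ∑ k : Fin r, (-N - s k - ((r : ℤ) - 1 - k.1)) + ∑ k, μ k with hM
  refine (Set.finite_Icc (0 : Fin r → ℤ) fun _ => M).subset fun a ha => ?_
  have h0 := altT_nonneg ha
  refine ⟨h0, fun k => ?_⟩
  refine (Finset.single_le_sum (fun i _ => h0 i) (Finset.mem_univ k)).trans ?_
  by_contra hlt
  refine ha ?_
  rw [altT, altS, schurF_eq_zero, mul_zero, smul_zero]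
  rw [Fin.sum_univ_add]
  simp only [Fin.append_left, Fin.append_right, Pi.add_apply]
  have : ∑ k : Fin r, (-N - (a k + s k) - ((r : ℤ) - 1 - k.1)) =
      ∑ k : Fin r, (-N - s k - ((r : ℤ) - 1 - k.1)) - ∑ k, a k := by
    rw [← Finset.sum_sub_distrib]
    exact Finset.sum_congr rfl fun k _ => by ring
  rw [this]
  linarith

/-- Simultaneous permutation of `a` and `s` leaves `|a|` and `h_a` unchanged. -/
lemma altK_perm (N : ℤ) {l : ℕ} (μ : Fin l → ℤ) {r : ℕ} (s : Fin r → ℤ)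
    (σ : Equiv.Perm (Fin r)) :
    altK N μ (s ∘ σ) = ((Equiv.Perm.sign σ : ℤ) : LamF) * altK N μ s := by
  rw [altK, altK, mul_finsum' _ _ (altT_support N μ s),
    ← finsum_comp_equiv (Equiv.arrowCongr σ.symm (Equiv.refl ℤ))]
  refine finsum_congr fun a => ?_
  have : (Equiv.arrowCongr σ.symm (Equiv.refl ℤ)) a = a ∘ σ := rfl
  rw [this, altT, altT, show a ∘ σ + s ∘ σ = (a + s) ∘ σ from rfl, altS_perm, mul_smul_comm,
    mul_left_comm]
  simp only [Function.comp_apply]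
  rw [Equiv.sum_comp σ a, Equiv.prod_comp σ fun k => hZF (a k)]

/-- The staircase `(r-1, r-2, …, 0)`. -/
def stair (r : ℕ) : Fin r → ℤ := fun k => (r : ℤ) - 1 - k.1

/-- The shift that appears when `B` is moved past `h_a` and a subset `I` of the factors is lowered. -/
def shiftI {r : ℕ} (I : Finset (Fin r)) : Fin (r+1) → ℤ :=
  Fin.cons ((r : ℤ) - I.card) ((fun k => if k ∈ I then 1 else 0) + stair r)

/-- If `I` is not an initial segment, `shiftI I` has a repeated entry. -/
lemma altK_shiftI_eq_zero (N : ℤ) {l : ℕ} (μ : Fin l → ℤ) {r : ℕ} (I : Finset (Fin r))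
    {i j : Fin r} (hij : j.1 = i.1 + 1) (hi : i ∉ I) (hj : j ∈ I) : altK N μ (shiftI I) = 0 := by
  refine eq_zero_of_alternating _ (altK_perm N μ) _ (i := i.succ) (j := j.succ) ?_ ?_
  · intro h
    rw [Fin.succ_inj.mp h] at hij
    omega
  · simp only [shiftI, stair, Fin.cons_succ, Pi.add_apply, hi, hj, hij, if_true, if_false]
    push_cast; ring

/-- A subset of `Fin r` without `i ∉ I`, `i + 1 ∈ I` is an initial segment. -/
lemma exists_eq_initial {r : ℕ} (I : Finset (Fin r))
    (h : ∀ i j : Fin r, j.1 = i.1 + 1 → j ∈ I → i ∈ I) :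
    ∃ k : Fin (r+1), I = Finset.univ.filter fun j : Fin r => j.castSucc < k := by
  classical
  have hex : ∃ k : ℕ, ∀ hk : k < r, (⟨k, hk⟩ : Fin r) ∉ I :=
    ⟨r, fun hk => absurd hk (lt_irrefl r)⟩
  have hle : Nat.find hex ≤ r := Nat.find_min' hex fun hk => absurd hk (lt_irrefl r)
  refine ⟨⟨Nat.find hex, Nat.lt_succ_of_le hle⟩, ?_⟩
  ext j
  simp only [Finset.mem_filter, Finset.mem_univ, true_and, Fin.lt_def, Fin.val_castSucc]
  constructor
  · intro hj
    by_contra hlt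
    rw [not_lt] at hlt
    have : ∀ m, Nat.find hex ≤ m → ∀ hm : m < r, (⟨m, hm⟩ : Fin r) ∉ I := by
      intro m hm
      induction m, hm using Nat.le_induction with
      | base => exact Nat.find_spec hex
      | succ m _ ih => exact fun hm' hI => ih (by omega) (h ⟨m, by omega⟩ ⟨m+1, hm'⟩ rfl hI)
    exact this j.1 hlt j.2 hj
  · intro hj
    have := Nat.find_min hex hj
    push Not at this
    exact this.2

lemma card_initial {r : ℕ} (k : Fin (r+1)) :
    (Finset.univ.filter fun j : Fin r => j.castSucc < k).card = k.1 := by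
  have : (Finset.univ.filter fun j : Fin r => j.castSucc < k) =
      (Finset.univ.filter fun j : Fin r => j.1 < k.1) := rfl
  rw [this, Fin.card_filter_val_lt, min_eq_right (Nat.le_of_lt_succ k.2)]

/-- For the initial segment of length `k`, `shiftI I` is the staircase permuted by a
`(k+1)`-cycle. -/
lemma altK_shiftI_initial (N : ℤ) {l : ℕ} (μ : Fin l → ℤ) {r : ℕ} (k : Fin (r+1)) :
    altK N μ (shiftI (Finset.univ.filter fun j : Fin r => j.castSucc < k)) =
      (-1) ^ k.1 * altK N μ (stair (r+1)) := by
  have : shiftI (Finset.univ.filter fun j : Fin r => j.castSucc < k) =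
      stair (r+1) ∘ (Fin.cycleRange k).symm := by
    funext j
    refine Fin.cases ?_ (fun j => ?_) j
    · rw [Function.comp_apply, Fin.cycleRange_symm_zero, shiftI, card_initial, Fin.cons_zero,
        stair]
      push_cast; ring
    · rw [Function.comp_apply, Fin.cycleRange_symm_succ, shiftI, Fin.cons_succ]
      by_cases hj : j.castSucc < k
      · rw [Fin.succAbove_of_castSucc_lt _ _ hj]
        simp only [stair, Pi.add_apply, Finset.mem_filter, Finset.mem_univ, hj, true_and, if_true,
          Fin.val_castSucc]
        push_cast; ring
      · rw [Fin.succAbove_of_le_castSucc _ _ (not_lt.mp hj)]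
        simp only [stair, Pi.add_apply, Finset.mem_filter, Finset.mem_univ, hj, true_and, if_false,
          Fin.val_succ]
        push_cast; ring
  rw [this, altK_perm, Equiv.Perm.sign_symm, Fin.sign_cycleRange]
  simp

/-- Only initial segments contribute to the sum over subsets. -/
lemma sum_altK_shiftI (N : ℤ) {l : ℕ} (μ : Fin l → ℤ) (r : ℕ) :
    ∑ I ∈ (Finset.univ : Finset (Fin r)).powerset,
      ((-1 : Fq) ^ I.card * qq ^ (-2 * (I.card : ℤ))) • altK N μ (shiftI I) =
    (∑ k ∈ Finset.range (r+1), qq ^ (-2 * (k : ℤ))) • altK N μ (stair (r+1)) := by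
  classical
  have hinj : Set.InjOn (fun k : Fin (r+1) => Finset.univ.filter fun j : Fin r => j.castSucc < k)
      (Finset.univ : Finset (Fin (r+1))) := fun k _ k' _ hk => by
    have := congrArg Finset.card hk
    simp only [card_initial] at this
    exact Fin.ext this
  rw [← Finset.sum_subset (s₁ := Finset.univ.image fun k : Fin (r+1) =>
    Finset.univ.filter fun j : Fin r => j.castSucc < k) (by simp [Finset.subset_iff]),
    Finset.sum_image hinj, Finset.sum_smul, Finset.sum_range]
  · refine Finset.sum_congr rfl fun k _ => ?_
    rw [altK_shiftI_initial, card_initial, show ((-1 : LamF) ^ k.1) = C ((-1) ^ k.1) by simp,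
      C_mul', smul_smul, mul_right_comm, ← mul_pow]
    simp
  · intro I _ hI
    by_cases h : ∀ i j : Fin r, j.1 = i.1 + 1 → j ∈ I → i ∈ I
    · obtain ⟨k, hk⟩ := exists_eq_initial I h
      exact absurd (Finset.mem_image.mpr ⟨k, Finset.mem_univ k, hk.symm⟩) hI
    · push Not at h
      obtain ⟨i, j, hij, hj, hi⟩ := h
      rw [altK_shiftI_eq_zero N μ I hij hi hj, smul_zero]

/-! ### Iterating the current -/

lemma schurF_cast {a b : ℕ} (h : a = b) (ρ : Fin b → ℤ) :
    schurF (fun k : Fin a => ρ (Fin.cast h k)) = schurF ρ := by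
  subst h; rfl

lemma bern_altS (N : ℤ) {l : ℕ} (μ : Fin l → ℤ) {r : ℕ} (x₀ : ℤ) (x : Fin r → ℤ) :
    bern (-N - x₀ - r) (altS N μ x) = altS N μ (Fin.cons x₀ x : Fin (r+1) → ℤ) := by
  rw [altS, altS, bern_schurF, ← schurF_cast (show r + 1 + l = r + l + 1 by omega)]
  congr 1
  funext k
  refine Fin.addCases (fun k => ?_) (fun k => ?_) k
  · rw [Fin.append_left]
    refine Fin.cases ?_ (fun k => ?_) k
    · have : Fin.cast (show r + 1 + l = r + l + 1 by omega) (Fin.castAdd l (0 : Fin (r+1))) = 0 := by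
        ext; simp
      rw [this, Fin.cons_zero, Fin.cons_zero]
      simp
    · have : Fin.cast (show r + 1 + l = r + l + 1 by omega) (Fin.castAdd l k.succ) =
          (Fin.castAdd l k).succ := by
        ext; simp
      rw [this, Fin.cons_succ, Fin.cons_succ, Fin.append_left]
      push_cast [Fin.val_succ]; ring
  · have : Fin.cast (show r + 1 + l = r + l + 1 by omega) (Fin.natAdd (r+1) k) =
        (Fin.natAdd r k).succ := by
      ext; simp; omega
    rw [this, Fin.cons_succ, Fin.append_right, Fin.append_right]

/-- Joining a first coordinate with the remaining ones shifted down by the indicator of `I`. -/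
def consShift {r : ℕ} (I : Finset (Fin r)) : ℤ × (Fin r → ℤ) ≃ (Fin (r+1) → ℤ) :=
  ((Equiv.refl ℤ).prodCongr (Equiv.subRight fun k => if k ∈ I then 1 else 0)).trans
    (Fin.consEquiv fun _ => ℤ)

lemma consShift_apply {r : ℕ} (I : Finset (Fin r)) (p : ℤ × (Fin r → ℤ)) :
    consShift I p = Fin.cons p.1 fun k => p.2 k - if k ∈ I then 1 else 0 := rfl

/-- The summand of `X_n^+ K_r(δ_r)` with first index `p.1`, after moving `B` past the `h`'s and
reindexing by `consShift I`. -/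
lemma bern_altT (N : ℤ) {l : ℕ} (μ : Fin l → ℤ) {r : ℕ} (p : ℤ × (Fin r → ℤ)) :
    qq ^ (-(N + 2 * r) - 2 * p.1) •
      (hZF p.1 * bern (-(N + 2 * r) - p.1) (altT N μ (stair r) p.2)) =
    ∑ I ∈ (Finset.univ : Finset (Fin r)).powerset,
      (qq ^ (-N - 2 * r) * ((-1) ^ I.card * qq ^ (-2 * (I.card : ℤ)))) •
        altT N μ (shiftI I) (consShift I p) := by
  rw [altT, map_smul, bern_prod_mul, Finset.smul_sum, Finset.mul_sum, Finset.smul_sum]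
  refine Finset.sum_congr rfl fun I _ => ?_
  have hsum : ∑ k, consShift I p k = p.1 + ∑ k, p.2 k - I.card := by
    rw [consShift_apply, Fin.sum_cons, Finset.sum_sub_distrib]
    simp
    ring
  have hx : consShift I p + shiftI I = Fin.cons (p.1 + (r - I.card)) (p.2 + stair r) := by
    funext k
    refine Fin.cases ?_ (fun k => ?_) k
    · simp [consShift_apply, shiftI]
    · simp only [consShift_apply, shiftI, Pi.add_apply, Fin.cons_succ]
      ring
  rw [altT, hsum, hx, ← bern_altS, Fin.prod_univ_succ]
  simp only [consShift_apply, Fin.cons_zero, Fin.cons_succ]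
  rw [show -(N + 2 * r) - p.1 + (I.card : ℤ) = -N - (p.1 + (r - I.card)) - r by ring,
    mul_smul_comm, mul_smul_comm, smul_smul, smul_smul, smul_smul, mul_assoc (hZF p.1)]
  congr 1
  rw [show -(N + 2 * (r : ℤ)) - 2 * p.1 = (-N - 2 * r) + (-2 * p.1) by ring,
    show -2 * (p.1 + ∑ k, p.2 k - (I.card : ℤ)) = -2 * p.1 + -2 * ∑ k, p.2 k + 2 * I.card by ring,
    zpow_add₀ qq_ne_zero, zpow_add₀ qq_ne_zero, zpow_add₀ qq_ne_zero,
    show -2 * (I.card : ℤ) = -(2 * I.card) by ring, zpow_neg]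
  have : qq ^ (2 * (I.card : ℤ)) ≠ 0 := zpow_ne_zero _ qq_ne_zero
  field_simp

/-- The induction step for the powers of `X_n^+`. -/
lemma curr_altK (N : ℤ) {l : ℕ} (μ : Fin l → ℤ) (r : ℕ) :
    curr (N + 2 * r) (altK N μ (stair r)) =
      (qq ^ (-N - 2 * r) * ∑ k ∈ Finset.range (r+1), qq ^ (-2 * (k : ℤ))) •
        altK N μ (stair (r+1)) := by
  have hfin : ∀ I : Finset (Fin r), (fun p : ℤ × (Fin r → ℤ) =>
      (qq ^ (-N - 2 * r) * ((-1) ^ I.card * qq ^ (-2 * (I.card : ℤ)))) •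
        altT N μ (shiftI I) (consShift I p)).HasFiniteSupport := fun I => by
    refine ((altT_support N μ (shiftI I)).preimage (consShift I).injective.injOn).subset ?_
    intro p hp h0
    exact hp (by simp only [h0, smul_zero])
  have hfin' : (fun p : ℤ × (Fin r → ℤ) => qq ^ (-(N + 2 * r) - 2 * p.1) •
      (hZF p.1 * bern (-(N + 2 * r) - p.1) (altT N μ (stair r) p.2))).HasFiniteSupport := by
    refine (Set.Finite.biUnion (Finset.univ : Finset (Fin r)).powerset.finite_toSet
      fun I _ => hfin I).subset ?_
    intro p hp
    rw [Function.mem_support, bern_altT] at hp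
    obtain ⟨I, hI, h⟩ := Finset.exists_ne_zero_of_sum_ne_zero hp
    exact Set.mem_biUnion hI h
  have h1 : curr (N + 2 * r) (altK N μ (stair r)) =
      ∑ᶠ p : ℤ × (Fin r → ℤ), qq ^ (-(N + 2 * r) - 2 * p.1) •
        (hZF p.1 * bern (-(N + 2 * r) - p.1) (altT N μ (stair r) p.2)) := by
    rw [(curr_eq _ _).2, finsum_curry _ hfin']
    refine finsum_congr fun a => ?_
    rw [altK]
    exact ((qq ^ (-(N + 2 * r) - 2 * a)) • LinearMap.mulLeft Fq (hZF a) ∘ₗ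
      bern (-(N + 2 * r) - a)).toAddMonoidHom.map_finsum (altT_support N μ (stair r))
  rw [h1, finsum_congr (bern_altT N μ), finsum_sum_comm _ _ fun I _ => hfin I, mul_smul,
    ← sum_altK_shiftI, Finset.smul_sum]
  refine Finset.sum_congr rfl fun I _ => ?_
  rw [← smul_finsum, finsum_comp_equiv (consShift I), mul_smul]
  rfl

lemma qq_pow_ne_one {k : ℕ} (hk : k ≠ 0) : qq ^ k ≠ 1 := by
  intro h
  rw [qq, ← RatFunc.algebraMap_X, ← map_pow, ← map_one (algebraMap (Polynomial ℚ) (RatFunc ℚ))] at h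
  have := congrArg Polynomial.natDegree (RatFunc.algebraMap_injective ℚ h)
  rw [Polynomial.natDegree_X_pow, Polynomial.natDegree_one] at this
  exact hk this

lemma qq_pow_sub_ne_zero (k : ℕ) : qq ^ (k+1) - (qq⁻¹) ^ (k+1) ≠ 0 := by
  intro h
  have h0 : qq ^ (k+1) ≠ 0 := pow_ne_zero _ qq_ne_zero
  rw [sub_eq_zero, inv_pow] at h
  have h1 := mul_inv_cancel₀ h0
  rw [← h, ← pow_add] at h1
  exact qq_pow_ne_one (by omega) h1

lemma qq_sub_ne_zero : qq - qq⁻¹ ≠ 0 := by simpa using qq_pow_sub_ne_zero 0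

lemma qfact_ne_zero (r : ℕ) : qfact r ≠ 0 :=
  Finset.prod_ne_zero_iff.mpr fun k _ => div_ne_zero (qq_pow_sub_ne_zero k) qq_sub_ne_zero

/-- `∑_{k=0}^r q^{-2k} = q^{-r}[r+1]`. -/
lemma sum_qq_pow (r : ℕ) : ∑ k ∈ Finset.range (r+1), qq ^ (-2 * (k : ℤ)) =
    qq ^ (-(r : ℤ)) * ((qq ^ (r+1) - (qq⁻¹) ^ (r+1)) / (qq - qq⁻¹)) := by
  rw [← mul_div_assoc, eq_div_iff qq_sub_ne_zero]
  induction r with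
  | zero => simp
  | succ r ih =>
    rw [Finset.sum_range_succ, add_mul, ih]
    have h0 := qq_ne_zero
    have e1 : qq ^ (-2 * ((r + 1 : ℕ) : ℤ)) = (qq ^ (r+1))⁻¹ * (qq ^ (r+1))⁻¹ := by
      rw [← zpow_natCast, ← zpow_neg, ← zpow_add₀ h0]; congr 1; ring
    have e2 : ∀ k : ℕ, qq ^ (-(k : ℤ)) = (qq ^ k)⁻¹ := fun k => by rw [zpow_neg, zpow_natCast]
    rw [e1, e2, e2]
    simp only [inv_pow]
    have h1 : qq ^ r ≠ 0 := pow_ne_zero _ h0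
    simp only [pow_succ]
    field_simp
    ring

lemma altK_zero (N : ℤ) {l : ℕ} (μ : Fin l → ℤ) : altK N μ (stair 0) = schurF μ := by
  rw [altK, finsum_unique, altT, altS, ← schurF_cast (Nat.zero_add l).symm]
  simp only [Finset.univ_eq_empty, Finset.sum_empty, Finset.prod_empty, mul_zero, zpow_zero,
    one_smul, one_mul]
  congr 1
  funext k
  have : Fin.cast (Nat.zero_add l).symm k = Fin.natAdd 0 k := by ext; simp
  rw [this, Fin.append_right]

/-- `(X_n^+)^r` on a Schur function, before symmetrization. -/
lemma Xp_iterate (i n m : ℤ) {l : ℕ} (μ : Fin l → ℤ) (r : ℕ) :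
    (Xp i n)^[r] (Finsupp.single m (schurF μ)) = Finsupp.single (m + r)
      ((qq ^ (-3 * ((r : ℤ) * ((r : ℤ) - 1) / 2) - r * (n + 1 + 2*m + i)) * qfact r) •
        altK (n + 1 + 2*m + i) μ (stair r)) := by
  induction r with
  | zero => simp [altK_zero, qfact]
  | succ r ih =>
    rw [Function.iterate_succ_apply', ih, Xp_single,
      show n + 1 + 2 * (m + r) + i = (n + 1 + 2 * m + i) + 2 * r by ring, map_smul, curr_altK,
      smul_smul]
    generalize n + 1 + 2 * m + i = N
    congr 1
    · push_cast; ring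
    · congr 1
      have hdiv : ((r + 1 : ℕ) : ℤ) * (((r + 1 : ℕ) : ℤ) - 1) / 2 = (r : ℤ) * (r - 1) / 2 + r := by
        rw [← Int.add_mul_ediv_right _ _ (two_ne_zero)]
        congr 1
        push_cast; ring
      rw [hdiv, sum_qq_pow, qfact, qfact, Finset.prod_range_succ,
        show -3 * ((r : ℤ) * (r - 1) / 2 + r) - ((r + 1 : ℕ) : ℤ) * N =
          (-3 * ((r : ℤ) * (r - 1) / 2) - r * N) + (-N - 2 * r) + (-(r : ℤ)) by push_cast; ring,
        zpow_add₀ qq_ne_zero, zpow_add₀ qq_ne_zero]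
      ring

/-! ### Symmetrization -/

lemma strictAnti_add_le {r : ℕ} {d : Fin r → ℤ} (hd : StrictAnti d) {j k : Fin r} (h : j ≤ k) :
    d k + ((k.1 : ℤ) - j.1) ≤ d j := by
  obtain ⟨k, hk⟩ := k
  have h' : j.1 ≤ k := h
  clear h
  induction k, h' using Nat.le_induction with
  | base => simp
  | succ k hjk ih =>
    have h1 := ih (by omega)
    have h2 : d ⟨k+1, hk⟩ < d ⟨k, by omega⟩ := hd (Nat.lt_succ_self k)
    push_cast at h1 ⊢
    linarith

lemma strictAnti_add_stair {r : ℕ} {lam : Fin r → ℕ} (h : Antitone lam) :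
    StrictAnti fun k => (lam k : ℤ) + stair r k := fun j k hjk => by
  have h1 : (lam k : ℤ) ≤ lam j := by exact_mod_cast h hjk.le
  have h2 : (j.1 : ℤ) < k.1 := by exact_mod_cast hjk
  simp only [stair]
  linarith

/-- A partition `λ` and a permutation `σ` give the exponent vector `(λ+δ)∘σ - δ`, where
`δ` is the staircase. -/
def expVec {r : ℕ} (p : {lam : Fin r → ℕ // Antitone lam} × Equiv.Perm (Fin r)) : Fin r → ℤ :=
  fun k => ((p.1.1 (p.2 k) : ℤ) + stair r (p.2 k)) - stair r k

lemma expVec_injective {r : ℕ} : Function.Injective (expVec (r := r)) := by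
  rintro ⟨⟨lam, hlam⟩, σ⟩ ⟨⟨lam', hlam'⟩, σ'⟩ h
  set d : Fin r → ℤ := fun k => (lam k : ℤ) + stair r k with hd
  set d' : Fin r → ℤ := fun k => (lam' k : ℤ) + stair r k with hd'
  have hda : StrictAnti d := strictAnti_add_stair hlam
  have hda' : StrictAnti d' := strictAnti_add_stair hlam'
  have h1 : ∀ k, d (σ k) = d' (σ' k) := fun k => by
    have := congrFun h k
    simpa [expVec, hd, hd'] using this
  have hr : Set.range (fun k => -d k) = Set.range fun k => -d' k := by
    rw [← σ.surjective.range_comp, ← σ'.surjective.range_comp fun k => -d' k]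
    congr 1
    funext k
    simp [h1]
  have hdd : d = d' := by
    have := (StrictMono.range_inj hda.neg hda'.neg).mp hr
    funext k
    simpa using congrFun this k
  have hl : lam = lam' := by
    funext k
    have := congrFun hdd k
    simpa [hd, hd'] using this
  have hs : σ = σ' := Equiv.ext fun k => hda.injective (by rw [h1, hdd])
  subst hl hs
  rfl

/-- In a nonzero summand `a + δ` is injective with nonnegative entries; sorting it in decreasing
order and subtracting `δ` gives a partition. -/
lemma altT_support_subset (N : ℤ) {l : ℕ} (μ : Fin l → ℤ) (r : ℕ) :
    Function.support (altT N μ (stair r)) ⊆ Set.range expVec := by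
  intro a ha
  have hpos := altT_nonneg ha
  set c : Fin r → ℤ := a + stair r with hc
  have hcinj : Function.Injective c := by
    intro j k hjk
    by_contra hne
    refine ha ?_
    rw [altT, eq_zero_of_alternating _ (altS_perm N μ) _ hne hjk, mul_zero, smul_zero]
  have hcpos : ∀ k, 0 ≤ c k := fun k => by
    have := hpos k
    have := k.2
    simp only [hc, Pi.add_apply, stair]
    omega
  set τ := Tuple.sort fun k => -c k
  have hmono : Monotone ((fun k => -c k) ∘ τ) := Tuple.monotone_sort _
  have hanti : StrictAnti (c ∘ τ) := by
    refine Antitone.strictAnti_of_injective (fun j k hjk => ?_) (hcinj.comp τ.injective)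
    have := hmono hjk
    simpa using this
  have hlam : ∀ k, 0 ≤ c (τ k) - stair r k := fun k => by
    have hk := k.2
    have h1 := strictAnti_add_le hanti (j := k) (k := ⟨r - 1, by omega⟩)
      (Fin.le_def.mpr (by simp only; omega))
    have h2 := hcpos (τ ⟨r - 1, by omega⟩)
    simp only [Function.comp_apply] at h1
    simp only [stair]
    omega
  have hlam' : Antitone fun k => (c (τ k) - stair r k).toNat := fun j k hjk => by
    refine Int.toNat_le_toNat ?_
    have := strictAnti_add_le hanti hjk
    simp only [Function.comp_apply] at this
    simp only [stair]
    linarith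
  refine ⟨(⟨_, hlam'⟩, τ.symm), ?_⟩
  funext k
  simp only [expVec]
  rw [Int.toNat_of_nonneg (hlam _), Equiv.apply_symm_apply]
  simp [hc]

lemma altT_expVec (N : ℤ) {l : ℕ} (μ : Fin l → ℤ) {r : ℕ}
    (lam : {lam : Fin r → ℕ // Antitone lam}) (σ : Equiv.Perm (Fin r)) :
    altT N μ (stair r) (expVec (lam, σ)) = qq ^ (-2 * ((∑ k, lam.1 k : ℕ) : ℤ)) •
      (((Equiv.Perm.sign σ : ℤ) : LamF) * (∏ k, hZF ((lam.1 (σ k) : ℤ) - (σ k).1 + k.1)) *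
        altS N μ fun k => (lam.1 k : ℤ) + stair r k) := by
  have h1 : ∑ k, expVec (lam, σ) k = ((∑ k, lam.1 k : ℕ) : ℤ) := by
    simp only [expVec]
    rw [Finset.sum_sub_distrib, Equiv.sum_comp σ fun k => (lam.1 k : ℤ) + stair r k,
      Finset.sum_add_distrib]
    push_cast; ring
  have h2 : expVec (lam, σ) + stair r = (fun k => (lam.1 k : ℤ) + stair r k) ∘ σ := by
    funext k
    simp [expVec]
  have h3 : ∀ k, expVec (lam, σ) k = (lam.1 (σ k) : ℤ) - (σ k).1 + k.1 := fun k => by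
    simp only [expVec, stair]; ring
  rw [altT, h1, h2, altS_perm]
  simp only [h3]
  congr 1
  ring

/-- Collecting the exponent vectors with the same sorted version `λ+δ` turns the products of the
`h`'s into `s_λ`. -/
lemma altK_stair (N : ℤ) {l : ℕ} (μ : Fin l → ℤ) (r : ℕ) :
    altK N μ (stair r) = ∑ᶠ (lam : Fin r → ℕ) (_ : Antitone lam),
      qq ^ (-2 * ((∑ k, lam k : ℕ) : ℤ)) • (schurF (fun k => (lam k : ℤ)) *
        altS N μ fun k => (lam k : ℤ) + stair r k) := by
  have hfin : (fun p => altT N μ (stair r) (expVec p)).HasFiniteSupport :=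
    (altT_support N μ (stair r)).preimage expVec_injective.injOn
  rw [altK, ← finsum_mem_univ, finsum_mem_inter_support_eq' _ Set.univ (Set.range expVec)
    fun a ha => ⟨fun _ => altT_support_subset N μ r ha, fun _ => Set.mem_univ a⟩,
    finsum_mem_range expVec_injective, finsum_curry _ hfin, ← finsum_subtype_eq_finsum_cond]
  refine finsum_congr fun lam => ?_
  rw [finsum_eq_sum_of_fintype]
  simp only [altT_expVec]
  rw [← Finset.smul_sum, ← Finset.sum_mul, schurF, Matrix.det_apply']
  rfl

/-- divided powers of `X_n^+` on the Schur basis.  For `r ≥ 1`,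
`n, m ∈ ℤ`, `i ∈ {0,1}` and a partition `μ = (μ₁,…,μ_l)`:
`X_n^{+(r)} (s_μ e^{mα}e^{iα/2})
  = q^{−3r(r−1)/2 − r(n+1+2m+i)} ∑_λ q^{−2|λ|} · s_λ · s_{(ν(λ),μ)} · e^{(m+r)α}e^{iα/2}`,
the sum over partitions `λ` with at most `r` parts (weakly decreasing tuples in `ℕ^r`;
all but finitely many summands vanish), where
`ν(λ)_k := −λ_k − 2(r−k) − (n+1+2m+i)` (`k = 1,…,r`). -/
theorem divided_power_Xplus_on_schur (r : ℕ) (hr : 1 ≤ r) (n m i : ℤ)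
    (hi : i = 0 ∨ i = 1) (l : ℕ) (mu : Fin l → ℕ) (hmu : Antitone mu) :
    divpow (Xp i n) r (Finsupp.single m (schurF fun k => (mu k : ℤ)))
      = Finsupp.single (m + r)
          (qq ^ (-3 * ((r : ℤ) * ((r : ℤ) - 1) / 2) - r * (n + 1 + 2*m + i)) •
            ∑ᶠ (lam : Fin r → ℕ) (_ : Antitone lam),
              qq ^ (-2 * ((∑ k, lam k : ℕ) : ℤ)) •
                (schurF (fun k => (lam k : ℤ)) *
                  schurF (Fin.append
                    (fun k : Fin r => -(lam k : ℤ) - 2*((r : ℤ) - 1 - (k.1 : ℤ))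
                      - (n + 1 + 2*m + i))
                    (fun k => (mu k : ℤ))))) := by
  rw [divpow, Xp_iterate, Finsupp.smul_single, smul_smul, mul_left_comm,
    inv_mul_cancel₀ (qfact_ne_zero r), mul_one, altK_stair]
  congr 2
  refine finsum_congr fun lam => finsum_congr fun _ => ?_
  rw [altS]
  congr 4
  funext k
  simp only [stair]
  ring
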